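/- Fix an integer n ≥ 100 and set ν = 1/n. Let I = [−ν, 1+ν] and J = [−2/3, −1/3] be the corresponding disjoint closed arcs of S¹ = ℝ/2ℤ (identified with real intervals). Let G(ω,x) = (σω, g_ω(x)) be a skew product over the Bernoulli shift whose fiber maps g_ω are orientation-preserving C¹ diffeomorphisms of S¹, depending continuously on ω in the C⁰ topology, and satisfying for every ω ∈ Σ²: (i) g_ω(I) ⊆ I; on I the derivative of g_ω lies in [1−ν, 1) if ω₀ = 0 and in (0, 1/4] if ω₀ = 1, and moreover g_ω(−ν) > 3/4 whenever ω₀ = 1; (ii) g_ω^{−1}(J) ⊆ J and the derivative of g_ω is everywhere greater than 1 + ν/2 on J; (iii) g_ω(x) ≥ x + ν²/4 for all x ∈ [−1/3, −ν], and g_ω(x) ≤ x − ν²/4 for all x ∈ [1+ν, 4/3]. Then the open set V = π^{−1}((0, 1/4)) is 2^{−n}-invisible for G with respect to the product measure P × Leb on Σ² × S¹. -/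

import Mathlib

open MeasureTheory Set Filter Topology

instance : Fact ((0 : ℝ) < 2) := ⟨by norm_num⟩

/-- The circle `S¹ = ℝ/2ℤ`. -/
abbrev S1 := AddCircle (2 : ℝ)

/-- The space `Σ² = {0,1}^ℤ` of bi-infinite binary sequences (`false` = 0, `true` = 1). -/
abbrev Sig2 := ℤ → Bool

/-- The Bernoulli shift `(σω)_k = ω_{k+1}`. -/
def shift (ω : Sig2) : Sig2 := fun k => ω (k + 1)

/-- The skew product `G(ω,x) = (σω, g_ω(x))` over the Bernoulli shift. -/
def skew (g : Sig2 → S1 ≃ₜ S1) (p : Sig2 × S1) : Sig2 × S1 :=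
  (shift p.1, g p.1 p.2)

/-- The average frequency with which the first `N` points of the orbit of `p` visit `V`. -/
noncomputable def visitFreq {X : Type*} (F : X → X) (V : Set X) (p : X) (N : ℕ) : ℝ :=
  (∑ k ∈ Finset.range N, V.indicator (fun _ => (1 : ℝ)) (F^[k] p)) / N

theorem S1_eq {x y : ℝ} (h : (x : S1) = (y : S1)) : ∃ m : ℤ, y = x + 2 * m := by
  have h1 : ((y - x : ℝ) : S1) = 0 := by
    rw [AddCircle.coe_sub, h, sub_self]
  obtain ⟨m, hm⟩ := (AddCircle.coe_eq_zero_iff (2 : ℝ)).1 h1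
  refine ⟨m, ?_⟩
  simp only [zsmul_eq_mul] at hm
  linarith

theorem S1_inj {x y : ℝ} (h : (x : S1) = (y : S1)) (h1 : y - x < 2) (h2 : x - y < 2) :
    x = y := by
  obtain ⟨m, hm⟩ := S1_eq h
  have a : (m : ℝ) < 1 := by linarith
  have b : (-1 : ℝ) < m := by linarith
  have a' : m < 1 := by exact_mod_cast a
  have b' : -1 < m := by exact_mod_cast b
  have : m = 0 := by omega
  subst this
  simp at hm
  exact hm.symm

theorem S1_add_two_mul (x : ℝ) (m : ℤ) : ((x + 2 * m : ℝ) : S1) = (x : S1) := by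
  rw [AddCircle.coe_add]
  have : ((2 * m : ℝ) : S1) = 0 := by
    rw [AddCircle.coe_eq_zero_iff]
    exact ⟨m, by simp [mul_comm]⟩
  rw [this, add_zero]

theorem S1_rep (x : S1) : ∃ t : ℝ, (t : S1) = x ∧ t ∈ Ico (-(2 / 3) : ℝ) (4 / 3) := by
  have := (AddCircle.coe_image_Ico_eq (2 : ℝ) (-(2/3)))
  have hx : x ∈ (QuotientAddGroup.mk : ℝ → S1) '' Ico (-(2/3) : ℝ) (-(2/3) + 2) := by
    rw [this]; trivial
  obtain ⟨t, ht, rfl⟩ := hx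
  exact ⟨t, rfl, ht.1, by have := ht.2; linarith⟩

/-- normalised lift -/
theorem exists_lift (ν : ℝ) (hν0 : 0 < ν) (hν1 : ν ≤ 1 / 100) (f : S1 → S1) (ℓ : ℝ → ℝ)
    (h1 : ∀ x : ℝ, ((ℓ x : ℝ) : S1) = f ((x : ℝ) : S1))
    (h2 : StrictMono ℓ) (h3 : ∀ x, ℓ (x + 2) = ℓ x + 2) (h4 : ContDiff ℝ 1 ℓ)
    (hI : MapsTo f ((fun x : ℝ => ((x : ℝ) : S1)) '' Icc (-ν) (1 + ν))
      ((fun x : ℝ => ((x : ℝ) : S1)) '' Icc (-ν) (1 + ν))) :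
    ∃ L : ℝ → ℝ, (∀ x : ℝ, ((L x : ℝ) : S1) = f ((x : ℝ) : S1)) ∧
      StrictMono L ∧ (∀ x, L (x + 2) = L x + 2) ∧ Differentiable ℝ L ∧
      (∀ x, deriv L x = deriv ℓ x) ∧ MapsTo L (Icc (-ν) (1 + ν)) (Icc (-ν) (1 + ν)) := by
  have h0 : (0 : ℝ) ∈ Icc (-ν) (1 + ν) := ⟨by linarith, by linarith⟩
  obtain ⟨t, ht, hte⟩ := hI ⟨0, h0, rfl⟩
  simp only at hte
  rw [← h1] at hte
  obtain ⟨m, hm⟩ := S1_eq hte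
  have hdiff : Differentiable ℝ ℓ := h4.differentiable (by norm_num)
  refine ⟨fun x => ℓ x + 2 * ((-m : ℤ) : ℝ), ?_, ?_, ?_, ?_, ?_, ?_⟩
  · intro x
    rw [S1_add_two_mul, h1]
  · intro x y hxy
    have := h2 hxy
    simpa using this
  · intro x
    simp only [h3]; ring
  · exact hdiff.add_const _
  · intro x
    simp
  · have hL0 : ℓ 0 + 2 * ((-m : ℤ) : ℝ) ∈ Icc (-ν) (1 + ν) := by
      have : ℓ 0 + 2 * ((-m : ℤ) : ℝ) = t := by push_cast; linarith
      rw [this]; exact ht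
    set L : ℝ → ℝ := fun x => ℓ x + 2 * ((-m : ℤ) : ℝ) with hL
    have hLc : Continuous L := hdiff.continuous.add continuous_const
    have key : ∀ x ∈ Icc (-ν) (1 + ν), ∃ k : ℤ, L x + 2 * k ∈ Icc (-ν) (1 + ν) := by
      intro x hx
      obtain ⟨s, hs, hse⟩ := hI ⟨x, hx, rfl⟩
      simp only at hse
      rw [← h1] at hse
      obtain ⟨k, hk⟩ := S1_eq hse
      refine ⟨m - k, ?_⟩
      have : L x + 2 * ((m - k : ℤ) : ℝ) = s := by
        simp only [hL]; push_cast; linarith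
      rw [this]; exact hs
    have avoid : ∀ x ∈ Icc (-ν) (1 + ν), L x ≠ 3 / 2 ∧ L x ≠ - 1 / 2 := by
      intro x hx
      obtain ⟨k, hk⟩ := key x hx
      constructor
      · intro he
        rw [he] at hk
        have a : (-1 : ℝ) < k := by linarith [hk.1]
        have b : (k : ℝ) < 0 := by linarith [hk.2]
        have a' : -1 < k := by exact_mod_cast a
        have b' : k < 0 := by exact_mod_cast b
        omega
      · intro he
        rw [he] at hk
        have a : (0 : ℝ) < k := by linarith [hk.1]
        have b : (k : ℝ) < 1 := by linarith [hk.2]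
        have a' : 0 < k := by exact_mod_cast a
        have b' : k < 1 := by exact_mod_cast b
        omega
    have hL0' : L 0 ∈ Icc (-ν) (1 + ν) := hL0
    have hconn : (L '' Icc (-ν) (1 + ν)).OrdConnected :=
      (isPreconnected_Icc.image L hLc.continuousOn).ordConnected
    intro x hx
    have up : L x < 3 / 2 := by
      by_contra hcon
      push Not at hcon
      have : (3 / 2 : ℝ) ∈ L '' Icc (-ν) (1 + ν) :=
        hconn.out ⟨0, h0, rfl⟩ ⟨x, hx, rfl⟩ ⟨by linarith [hL0'.2], hcon⟩
      obtain ⟨y, hy, hye⟩ := this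
      exact (avoid y hy).1 hye
    have dn : - 1 / 2 < L x := by
      by_contra hcon
      push Not at hcon
      have : (- 1 / 2 : ℝ) ∈ L '' Icc (-ν) (1 + ν) :=
        hconn.out ⟨x, hx, rfl⟩ ⟨0, h0, rfl⟩ ⟨hcon, by linarith [hL0'.1]⟩
      obtain ⟨y, hy, hye⟩ := this
      exact (avoid y hy).2 hye
    obtain ⟨k, hk⟩ := key x hx
    have a : (-1 : ℝ) < k := by linarith [hk.1]
    have b : (k : ℝ) < 1 := by linarith [hk.2]
    have a' : -1 < k := by exact_mod_cast a
    have b' : k < 1 := by exact_mod_cast b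
    have : k = 0 := by omega
    subst this
    simpa using hk

theorem skew_iter_fst (g : Sig2 → S1 ≃ₜ S1) (p : Sig2 × S1) (k : ℕ) (i : ℤ) :
    ((skew g)^[k] p).1 i = p.1 (i + k) := by
  induction k generalizing p with
  | zero => simp
  | succ k ih =>
    rw [Function.iterate_succ_apply, ih]
    simp only [skew, shift]
    push_cast; ring_nf

/-- Once in the lower gap, the orbit reaches `I`. -/
theorem up_enter (ν : ℝ) (hν0 : 0 < ν) (g : Sig2 → S1 ≃ₜ S1)
    (hup : ∀ ω : Sig2, ∀ x ∈ Icc (-(1 / 3) : ℝ) (-ν),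
      ∃ t : ℝ, x + ν ^ 2 / 4 ≤ t ∧ t ≤ 1 + ν ∧ g ω ((x : ℝ) : S1) = ((t : ℝ) : S1))
    (m : ℕ) : ∀ (p : Sig2 × S1) (x : ℝ), p.2 = (x : S1) → -(1 / 3) ≤ x → x ≤ 1 + ν →
      -ν ≤ x + m * (ν ^ 2 / 4) →
      ∃ k, ((skew g)^[k] p).2 ∈ ((fun x : ℝ => ((x : ℝ) : S1)) '' Icc (-ν) (1 + ν)) := by
  induction m with
  | zero =>
    intro p x hp h1 h2 h3
    exact ⟨0, x, ⟨by simpa using h3, h2⟩, by simp [hp]⟩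
  | succ m ih =>
    intro p x hp h1 h2 h3
    by_cases hx : -ν ≤ x
    · exact ⟨0, x, ⟨hx, h2⟩, by simp [hp]⟩
    · push Not at hx
      obtain ⟨t, ht1, ht2, ht3⟩ := hup p.1 x ⟨h1, hx.le⟩
      have hpos : 0 < ν ^ 2 / 4 := by positivity
      obtain ⟨k, hk⟩ := ih (skew g p) t (by simp [skew, hp, ht3]) (by linarith) ht2
        (by push_cast at h3; linarith)
      exact ⟨k + 1, by rw [Function.iterate_succ_apply]; exact hk⟩

theorem down_enter (ν : ℝ) (hν0 : 0 < ν) (g : Sig2 → S1 ≃ₜ S1)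
    (hdown : ∀ ω : Sig2, ∀ x ∈ Icc (1 + ν) (4 / 3 : ℝ),
      ∃ t : ℝ, -ν ≤ t ∧ t ≤ x - ν ^ 2 / 4 ∧ g ω ((x : ℝ) : S1) = ((t : ℝ) : S1))
    (m : ℕ) : ∀ (p : Sig2 × S1) (x : ℝ), p.2 = (x : S1) → -ν ≤ x → x ≤ 4 / 3 →
      x - m * (ν ^ 2 / 4) ≤ 1 + ν →
      ∃ k, ((skew g)^[k] p).2 ∈ ((fun x : ℝ => ((x : ℝ) : S1)) '' Icc (-ν) (1 + ν)) := by
  induction m with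
  | zero =>
    intro p x hp h1 h2 h3
    exact ⟨0, x, ⟨h1, by simpa using h3⟩, by simp [hp]⟩
  | succ m ih =>
    intro p x hp h1 h2 h3
    by_cases hx : x ≤ 1 + ν
    · exact ⟨0, x, ⟨h1, hx⟩, by simp [hp]⟩
    · push Not at hx
      obtain ⟨t, ht1, ht2, ht3⟩ := hdown p.1 x ⟨hx.le, h2⟩
      have hpos : 0 < ν ^ 2 / 4 := by positivity
      obtain ⟨k, hk⟩ := ih (skew g p) t (by simp [skew, hp, ht3]) ht1 (by linarith)
        (by push_cast at h3; linarith)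
      exact ⟨k + 1, by rw [Function.iterate_succ_apply]; exact hk⟩

/-- A point whose orbit leaves `J` eventually enters `I`. -/
theorem enter_I (ν : ℝ) (hν0 : 0 < ν) (hν1 : ν ≤ 1 / 100) (g : Sig2 → S1 ≃ₜ S1)
    (hup : ∀ ω : Sig2, ∀ x ∈ Icc (-(1 / 3) : ℝ) (-ν),
      ∃ t : ℝ, x + ν ^ 2 / 4 ≤ t ∧ t ≤ 1 + ν ∧ g ω ((x : ℝ) : S1) = ((t : ℝ) : S1))
    (hdown : ∀ ω : Sig2, ∀ x ∈ Icc (1 + ν) (4 / 3 : ℝ),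
      ∃ t : ℝ, -ν ≤ t ∧ t ≤ x - ν ^ 2 / 4 ∧ g ω ((x : ℝ) : S1) = ((t : ℝ) : S1))
    (p : Sig2 × S1)
    (hp : p.2 ∉ ((fun x : ℝ => ((x : ℝ) : S1)) '' Icc (-(2 / 3) : ℝ) (-(1 / 3)))) :
    ∃ k, ((skew g)^[k] p).2 ∈ ((fun x : ℝ => ((x : ℝ) : S1)) '' Icc (-ν) (1 + ν)) := by
  obtain ⟨t, ht, ht1, ht2⟩ := S1_rep p.2
  have hpos : 0 < ν ^ 2 / 4 := by positivity
  have h13 : -(1 / 3) < t := by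
    by_contra hcon
    push Not at hcon
    exact hp ⟨t, ⟨ht1, hcon⟩, ht⟩
  obtain ⟨m, hm⟩ := exists_nat_gt (1 / (ν ^ 2 / 4))
  have hm' : 1 < m * (ν ^ 2 / 4) := by
    rwa [div_lt_iff₀ hpos] at hm
  by_cases h : t ≤ 1 + ν
  · exact up_enter ν hν0 g hup m p t ht.symm h13.le h (by linarith)
  · push Not at h
    exact down_enter ν hν0 g hdown m p t ht.symm (by linarith) ht2.le (by linarith)

/-- Expansion on `J`. -/
theorem expand_J (ν : ℝ) (hν0 : 0 < ν) (g : Sig2 → S1 ≃ₜ S1)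
    (hstep : ∀ ω : Sig2, ∀ x ∈ Icc (-(2 / 3) : ℝ) (-(1 / 3)),
      ∀ y ∈ Icc (-(2 / 3) : ℝ) (-(1 / 3)), x ≤ y →
      g ω (x : S1) ∈ ((fun x : ℝ => ((x : ℝ) : S1)) '' Icc (-(2 / 3) : ℝ) (-(1 / 3))) →
      g ω (y : S1) ∈ ((fun x : ℝ => ((x : ℝ) : S1)) '' Icc (-(2 / 3) : ℝ) (-(1 / 3))) →
      ∃ x' ∈ Icc (-(2 / 3) : ℝ) (-(1 / 3)), ∃ y' ∈ Icc (-(2 / 3) : ℝ) (-(1 / 3)),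
        g ω (x : S1) = (x' : S1) ∧ g ω (y : S1) = (y' : S1) ∧
        (1 + ν / 2) * (y - x) ≤ y' - x') (k : ℕ) :
    ∀ (ω : Sig2), ∀ x ∈ Icc (-(2 / 3) : ℝ) (-(1 / 3)),
      ∀ y ∈ Icc (-(2 / 3) : ℝ) (-(1 / 3)), x ≤ y →
      (∀ j, ((skew g)^[j] (ω, (x : S1))).2 ∈
        ((fun x : ℝ => ((x : ℝ) : S1)) '' Icc (-(2 / 3) : ℝ) (-(1 / 3)))) →
      (∀ j, ((skew g)^[j] (ω, (y : S1))).2 ∈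
        ((fun x : ℝ => ((x : ℝ) : S1)) '' Icc (-(2 / 3) : ℝ) (-(1 / 3)))) →
      (1 + ν / 2) ^ k * (y - x) ≤ 1 / 3 := by
  induction k with
  | zero =>
    intro ω x hx y hy hxy _ _
    simp only [pow_zero, one_mul]
    linarith [hx.1, hy.2]
  | succ k ih =>
    intro ω x hx y hy hxy h1 h2
    obtain ⟨x', hx', y', hy', e1, e2, h⟩ := hstep ω x hx y hy hxy (h1 1) (h2 1)
    have hle : x' ≤ y' := by nlinarith
    have := ih (shift ω) x' hx' y' hy' hle
      (fun j => by
        have := h1 (j + 1)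
        rw [Function.iterate_succ_apply] at this
        simpa only [skew, e1] using this)
      (fun j => by
        have := h2 (j + 1)
        rw [Function.iterate_succ_apply] at this
        simpa only [skew, e2] using this)
    calc (1 + ν / 2) ^ (k + 1) * (y - x) = (1 + ν / 2) ^ k * ((1 + ν / 2) * (y - x)) := by ring
      _ ≤ (1 + ν / 2) ^ k * (y' - x') := by gcongr
      _ ≤ 1 / 3 := this

/-- At most one point in each fiber stays in `J` forever. -/
theorem stay_J_subsingleton (ν : ℝ) (hν0 : 0 < ν) (g : Sig2 → S1 ≃ₜ S1)
    (hstep : ∀ ω : Sig2, ∀ x ∈ Icc (-(2 / 3) : ℝ) (-(1 / 3)),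
      ∀ y ∈ Icc (-(2 / 3) : ℝ) (-(1 / 3)), x ≤ y →
      g ω (x : S1) ∈ ((fun x : ℝ => ((x : ℝ) : S1)) '' Icc (-(2 / 3) : ℝ) (-(1 / 3))) →
      g ω (y : S1) ∈ ((fun x : ℝ => ((x : ℝ) : S1)) '' Icc (-(2 / 3) : ℝ) (-(1 / 3))) →
      ∃ x' ∈ Icc (-(2 / 3) : ℝ) (-(1 / 3)), ∃ y' ∈ Icc (-(2 / 3) : ℝ) (-(1 / 3)),
        g ω (x : S1) = (x' : S1) ∧ g ω (y : S1) = (y' : S1) ∧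
        (1 + ν / 2) * (y - x) ≤ y' - x') (ω : Sig2) :
    {x : S1 | ∀ j, ((skew g)^[j] (ω, x)).2 ∈
        ((fun x : ℝ => ((x : ℝ) : S1)) '' Icc (-(2 / 3) : ℝ) (-(1 / 3)))}.Subsingleton := by
  have main : ∀ x ∈ Icc (-(2 / 3) : ℝ) (-(1 / 3)),
      ∀ y ∈ Icc (-(2 / 3) : ℝ) (-(1 / 3)), x ≤ y →
      (∀ j, ((skew g)^[j] (ω, (x : S1))).2 ∈
        ((fun x : ℝ => ((x : ℝ) : S1)) '' Icc (-(2 / 3) : ℝ) (-(1 / 3)))) →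
      (∀ j, ((skew g)^[j] (ω, (y : S1))).2 ∈
        ((fun x : ℝ => ((x : ℝ) : S1)) '' Icc (-(2 / 3) : ℝ) (-(1 / 3)))) → x = y := by
    intro x hx y hy hxy h1 h2
    by_contra hne
    have hlt : 0 < y - x := sub_pos.2 (lt_of_le_of_ne hxy hne)
    obtain ⟨k, hk⟩ := pow_unbounded_of_one_lt (1 / 3 / (y - x))
      (show (1 : ℝ) < 1 + ν / 2 by linarith)
    rw [div_lt_iff₀ hlt] at hk
    have := expand_J ν hν0 g hstep k ω x hx y hy hxy h1 h2
    linarith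
  intro a ha b hb
  obtain ⟨x, hx, rfl⟩ := ha 0
  obtain ⟨y, hy, rfl⟩ := hb 0
  rcases le_total x y with h | h
  · rw [main x hx y hy h ha hb]
  · rw [main y hy x hx h hb ha]

/-- Orbit in `I`: real coordinates. -/
theorem orbit_I (ν : ℝ) (hν0 : 0 < ν) (hν1 : ν ≤ 1 / 100) (g : Sig2 → S1 ≃ₜ S1)
    (hI : ∀ ω : Sig2, ∀ x ∈ Icc (-ν) (1 + ν), ∃ y ∈ Icc (-ν) (1 + ν),
      g ω (x : S1) = (y : S1) ∧ (ω 0 = true → 3 / 4 < y) ∧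
      (ω 0 = false → (1 - ν) * (x + ν) ≤ y + ν))
    (p : Sig2 × S1) (x : ℝ) (hx : x ∈ Icc (-ν) (1 + ν)) (hp : p.2 = (x : S1)) (k : ℕ) :
    ∃ y ∈ Icc (-ν) (1 + ν), ((skew g)^[k] p).2 = (y : S1) ∧
      ∀ j < k, p.1 j = true → (1 - ν) ^ (k - 1 - j) * (3 / 4 + ν) ≤ y + ν := by
  induction k with
  | zero => exact ⟨x, hx, by simpa using hp, fun j hj => by omega⟩
  | succ k ih =>
    obtain ⟨y, hy, hye, hyj⟩ := ih
    set q := (skew g)^[k] p with hq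
    obtain ⟨z, hz, hze, hz1, hz0⟩ := hI q.1 y hy
    have hq0 : q.1 0 = p.1 k := by rw [hq, skew_iter_fst]; simp
    refine ⟨z, hz, ?_, ?_⟩
    · rw [Function.iterate_succ_apply', ← hq]
      simp only [skew, hye, hze]
    · intro j hj hpj
      cases hb : q.1 0 with
      | true =>
        have h34 := hz1 hb
        have : (1 - ν) ^ (k + 1 - 1 - j) ≤ 1 := pow_le_one₀ (by linarith) (by linarith)
        nlinarith
      | false =>
        have hjk : j < k := by
          rcases Nat.lt_succ_iff_lt_or_eq.1 hj with h | h
          · exact h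
          · subst h
            rw [hq0, hpj] at hb
            simp at hb
        have h1 := hyj j hjk hpj
        have h2 := hz0 hb
        have e : k + 1 - 1 - j = (k - 1 - j) + 1 := by omega
        rw [e, pow_succ]
        calc (1 - ν) ^ (k - 1 - j) * (1 - ν) * (3 / 4 + ν)
            = (1 - ν) * ((1 - ν) ^ (k - 1 - j) * (3 / 4 + ν)) := by ring
          _ ≤ (1 - ν) * (y + ν) := by
            apply mul_le_mul_of_nonneg_left h1; linarith
          _ ≤ z + ν := h2

theorem pow_bound (n : ℕ) (hn : 100 ≤ n) (ν : ℝ) (hν : ν = 1 / (n : ℝ)) (i : ℕ) (hi : i < n) :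
    1 / 4 + ν ≤ (1 - ν) ^ i * (3 / 4 + ν) := by
  have hn' : (100 : ℝ) ≤ n := by exact_mod_cast hn
  have hν0 : 0 < ν := by rw [hν]; positivity
  have hν1 : ν ≤ 1 / 100 := by
    rw [hν]; apply one_div_le_one_div_of_le <;> linarith
  have hn1 : (0 : ℝ) < n - 1 := by linarith
  have h1 : Real.exp (-(1 / ((n : ℝ) - 1))) ≤ 1 - ν := by
    have := Real.add_one_le_exp (1 / ((n : ℝ) - 1))
    rw [Real.exp_neg]
    have e : 1 - ν = (1 / ((n : ℝ) - 1) + 1)⁻¹ := by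
      rw [hν]; field_simp; ring
    rw [e]
    apply inv_anti₀ _ this
    positivity
  have h2 : Real.exp (-1) ≤ (1 - ν) ^ i := by
    calc Real.exp (-1) = Real.exp (-(1 / ((n : ℝ) - 1))) ^ (n - 1) := by
          rw [← Real.exp_nat_mul, Nat.cast_sub (by omega)]
          congr 1
          push_cast
          field_simp
      _ ≤ (1 - ν) ^ (n - 1) := pow_le_pow_left₀ (Real.exp_pos _).le h1 _
      _ ≤ (1 - ν) ^ i := pow_le_pow_of_le_one (by linarith) (by linarith) (by omega)
  have h3 : (0.36 : ℝ) ≤ Real.exp (-1) := by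
    have := Real.exp_one_lt_d9
    rw [Real.exp_neg]
    rw [le_inv_comm₀ (by norm_num) (Real.exp_pos _)]
    norm_num
    linarith
  nlinarith
theorem S1_singleton_null (x : S1) : (volume : Measure S1) {x} = 0 := by
  refine le_antisymm (ENNReal.le_of_forall_pos_le_add ?_) (zero_le)
  intro ε hε _
  have h1 : ({x} : Set S1) ⊆ Metric.closedBall x (ε / 2) := by
    intro y hy
    rw [mem_singleton_iff.1 hy]
    exact Metric.mem_closedBall_self (by positivity)
  refine (measure_mono h1).trans ?_
  rw [AddCircle.volume_closedBall, zero_add]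
  calc ENNReal.ofReal (min 2 (2 * ((ε : ℝ) / 2))) ≤ ENNReal.ofReal (ε : ℝ) := by
        apply ENNReal.ofReal_le_ofReal
        refine (min_le_right _ _).trans (le_of_eq (by ring))
    _ = ε := ENNReal.ofReal_coe_nnreal

/-- The event that the `n` symbols from position `k` on are all `0`. -/
def zeroBlock (n k : ℕ) : Set Sig2 := {ω | ∀ i ∈ Finset.Ico (k : ℤ) (k + n), ω i = false}

theorem zeroBlock_meas (n k : ℕ) : MeasurableSet (zeroBlock n k) := by
  have : zeroBlock n k = ⋂ i ∈ Finset.Ico (k : ℤ) (k + n), (fun ω : Sig2 => ω i) ⁻¹' {false} := by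
    ext ω; simp [zeroBlock]
  rw [this]
  exact Finset.measurableSet_biInter _ fun i _ => measurable_pi_apply i (measurableSet_singleton _)

section prob
variable (P : Measure Sig2)

theorem zeroBlock_prob
    (hP : ∀ (s : Finset ℤ) (α : ℤ → Bool),
      P {ω : Sig2 | ∀ i ∈ s, ω i = α i} = (1 / 2 : ENNReal) ^ s.card) (n k : ℕ) :
    P (zeroBlock n k) = (1 / 2 : ENNReal) ^ n := by
  have := hP (Finset.Ico (k : ℤ) (k + n)) (fun _ => false)
  simpa [zeroBlock] using this

theorem zeroBlock_indep [IsProbabilityMeasure P]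
    (hP : ∀ (s : Finset ℤ) (α : ℤ → Bool),
      P {ω : Sig2 | ∀ i ∈ s, ω i = α i} = (1 / 2 : ENNReal) ^ s.card) (n k l : ℕ)
    (hkl : k + n ≤ l ∨ l + n ≤ k) :
    ProbabilityTheory.IndepSet (zeroBlock n k) (zeroBlock n l) P := by
  rw [ProbabilityTheory.indepSet_iff_measure_inter_eq_mul (zeroBlock_meas n k)
    (zeroBlock_meas n l) P, zeroBlock_prob P hP, zeroBlock_prob P hP]
  have h := hP (Finset.Ico (k : ℤ) (k + n) ∪ Finset.Ico (l : ℤ) (l + n)) (fun _ => false)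
  have hd : Disjoint (Finset.Ico (k : ℤ) (k + n)) (Finset.Ico (l : ℤ) (l + n)) := by
    rw [Finset.disjoint_left]
    intro i hi hi'
    simp only [Finset.mem_Ico] at hi hi'
    omega
  rw [Finset.card_union_of_disjoint hd] at h
  have e : zeroBlock n k ∩ zeroBlock n l = {ω : Sig2 | ∀ i ∈ Finset.Ico (k : ℤ) (k + n) ∪
      Finset.Ico (l : ℤ) (l + n), ω i = (fun _ => false) i} := by
    ext ω
    simp only [zeroBlock, mem_inter_iff, mem_ofPred_eq, Finset.mem_union]
    constructor
    · rintro ⟨h1, h2⟩ i (hi | hi)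
      · exact h1 i hi
      · exact h2 i hi
    · intro h
      exact ⟨fun i hi => h i (Or.inl hi), fun i hi => h i (Or.inr hi)⟩
  rw [e, h, ← pow_add]
  simp

theorem indepFun_ind {A B : Set Sig2} (h : ProbabilityTheory.IndepSet A B P) :
    ProbabilityTheory.IndepFun (A.indicator (fun _ => (1 : ℝ))) (B.indicator (fun _ => (1 : ℝ)))
      P := by
  have key : ∀ (C : Set Sig2), MeasurableSpace.comap (C.indicator (fun _ => (1 : ℝ)))
      inferInstance ≤ MeasurableSpace.generateFrom {C} := by
    intro C
    have hC : MeasurableSet[MeasurableSpace.generateFrom {C}] C :=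
      MeasurableSpace.measurableSet_generateFrom rfl
    rintro _ ⟨s, hs, rfl⟩
    have h4 := Set.indicator_const_preimage C s (1 : ℝ)
    simp only [mem_insert_iff, mem_singleton_iff] at h4
    rcases h4 with h4 | h4 | h4 | h4 <;> rw [h4]
    · exact @MeasurableSet.univ _ (MeasurableSpace.generateFrom {C})
    · exact hC
    · exact @MeasurableSet.compl _ _ (MeasurableSpace.generateFrom {C}) hC
    · exact @MeasurableSet.empty _ (MeasurableSpace.generateFrom {C})
  rw [ProbabilityTheory.IndepFun_iff_Indep]
  rw [ProbabilityTheory.IndepSet_iff_Indep] at h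
  exact ProbabilityTheory.indep_of_indep_of_le_left
    (ProbabilityTheory.indep_of_indep_of_le_right h (key B)) (key A)

theorem identDistrib_ind [IsProbabilityMeasure P] {A B : Set Sig2} (hA : MeasurableSet A) (hB : MeasurableSet B)
    (h : P A = P B) :
    ProbabilityTheory.IdentDistrib (A.indicator (fun _ => (1 : ℝ)))
      (B.indicator (fun _ => (1 : ℝ))) P P := by
  have mA : Measurable (A.indicator (fun _ => (1 : ℝ))) := measurable_const.indicator hA
  have mB : Measurable (B.indicator (fun _ => (1 : ℝ))) := measurable_const.indicator hB
  refine ⟨mA.aemeasurable, mB.aemeasurable, ?_⟩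
  ext s hs
  rw [Measure.map_apply mA hs, Measure.map_apply mB hs]
  classical
  rw [Set.indicator_const_preimage_eq_union, Set.indicator_const_preimage_eq_union]
  have hc : P Aᶜ = P Bᶜ := by
    rw [prob_compl_eq_one_sub hA, prob_compl_eq_one_sub hB, h]
  by_cases h1 : (1 : ℝ) ∈ s <;> by_cases h0 : (0 : ℝ) ∈ s <;> simp [h1, h0, h, hc]

theorem block_slln [IsProbabilityMeasure P]
    (hP : ∀ (s : Finset ℤ) (α : ℤ → Bool),
      P {ω : Sig2 | ∀ i ∈ s, ω i = α i} = (1 / 2 : ENNReal) ^ s.card) (n : ℕ) (r : ℕ) :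
    ∀ᵐ ω ∂P, Tendsto (fun M : ℕ => (∑ j ∈ Finset.range M,
      (zeroBlock n (n * j + r)).indicator (fun _ => (1 : ℝ)) ω) / M) atTop
      (𝓝 ((1 / 2 : ℝ) ^ n)) := by
  have h := ProbabilityTheory.strong_law_ae_real (μ := P)
    (fun j => (zeroBlock n (n * j + r)).indicator (fun _ => (1 : ℝ)))
    ((integrable_const (1 : ℝ)).indicator (zeroBlock_meas _ _))
    (by
      intro i j hij
      apply indepFun_ind
      apply zeroBlock_indep P hP
      rcases lt_or_gt_of_ne hij with h | h
      · left
        have := Nat.mul_le_mul_left n (Nat.succ_le_of_lt h)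
        rw [Nat.mul_succ] at this
        omega
      · right
        have := Nat.mul_le_mul_left n (Nat.succ_le_of_lt h)
        rw [Nat.mul_succ] at this
        omega)
    (fun i => identDistrib_ind P (zeroBlock_meas _ _) (zeroBlock_meas _ _)
      (by rw [zeroBlock_prob P hP, zeroBlock_prob P hP]))
  have e : ∫ ω, (zeroBlock n (n * 0 + r)).indicator (fun _ => (1 : ℝ)) ω ∂P = (1 / 2 : ℝ) ^ n := by
    rw [integral_indicator (zeroBlock_meas _ _)]
    simp [Measure.real, zeroBlock_prob P hP]
  rw [e] at h
  exact h

end prob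

theorem sum_blocks (a : ℕ → ℝ) (n M : ℕ) :
    ∑ k ∈ Finset.range (n * M), a k =
      ∑ r ∈ Finset.range n, ∑ j ∈ Finset.range M, a (n * j + r) := by
  induction M with
  | zero => simp
  | succ M ih =>
    rw [Nat.mul_succ, Finset.sum_range_add, ih]
    simp only [Finset.sum_range_succ, Finset.sum_add_distrib]

/-- Deterministic estimate. -/
theorem limsup_bound (n : ℕ) (hn : 0 < n) (a b : ℕ → ℝ) (c : ℝ) (K : ℕ)
    (ha0 : ∀ k, 0 ≤ a k) (ha1 : ∀ k, a k ≤ 1) (hb0 : ∀ k, 0 ≤ b k)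
    (hab : ∀ k, a (K + k) ≤ b k)
    (hb : ∀ r < n, Tendsto (fun M : ℕ => (∑ j ∈ Finset.range M, b (n * j + r)) / M) atTop
      (𝓝 c)) :
    limsup (fun N : ℕ => (∑ k ∈ Finset.range N, a k) / (N : ℝ)) atTop ≤ c := by
  have hn' : (0 : ℝ) < n := by exact_mod_cast hn
  set v : ℕ → ℝ := fun N => (K : ℝ) / N + ∑ r ∈ Finset.range n,
    ((∑ j ∈ Finset.range (N / n + 1), b (n * j + r)) / ((N / n + 1 : ℕ) : ℝ)) *
      (1 / n + 1 / N) with hv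
  have hvt : Tendsto v atTop (𝓝 c) := by
    have e : c = 0 + ∑ r ∈ Finset.range n, c * (1 / n + 0) := by
      simp; field_simp
    rw [e]
    refine (tendsto_const_div_atTop_nhds_zero_nat _).add (tendsto_finsetSum _ fun r hr => ?_)
    refine Tendsto.mul ?_ (tendsto_const_nhds.add tendsto_one_div_atTop_nhds_zero_nat)
    have hM : Tendsto (fun N : ℕ => N / n + 1) atTop atTop :=
      (tendsto_add_atTop_nat 1).comp (Nat.tendsto_div_const_atTop hn.ne')
    exact (hb r (Finset.mem_range.1 hr)).comp hM
  have hle : ∀ N : ℕ, 0 < N → (∑ k ∈ Finset.range N, a k) / (N : ℝ) ≤ v N := by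
    intro N hN
    have hN' : (0 : ℝ) < N := by exact_mod_cast hN
    have h1 : ∑ k ∈ Finset.range N, a k ≤ K + ∑ k ∈ Finset.range N, b k := by
      calc ∑ k ∈ Finset.range N, a k ≤ ∑ k ∈ Finset.range (K + N), a k := by
            apply Finset.sum_le_sum_of_subset_of_nonneg
            · intro i; simp only [Finset.mem_range]; omega
            · intro i _ _; exact ha0 i
        _ = ∑ k ∈ Finset.range K, a k + ∑ k ∈ Finset.range N, a (K + k) :=
            Finset.sum_range_add _ _ _
        _ ≤ ∑ k ∈ Finset.range K, (1 : ℝ) + ∑ k ∈ Finset.range N, b k :=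
            add_le_add (Finset.sum_le_sum fun i _ => ha1 i) (Finset.sum_le_sum fun i _ => hab i)
        _ = K + ∑ k ∈ Finset.range N, b k := by simp
    have h2 : ∑ k ∈ Finset.range N, b k ≤ ∑ r ∈ Finset.range n,
        ∑ j ∈ Finset.range (N / n + 1), b (n * j + r) := by
      rw [← sum_blocks]
      apply Finset.sum_le_sum_of_subset_of_nonneg
      · intro i; simp only [Finset.mem_range]
        have := Nat.lt_mul_div_succ N hn
        omega
      · intro i _ _; exact hb0 i
    have h3 : ((N / n + 1 : ℕ) : ℝ) ≤ N * (1 / n + 1 / N) := by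
      have := @Nat.cast_div_le ℝ _ _ _ N n
      push_cast
      have e : (N : ℝ) * (1 / n + 1 / N) = N / n + 1 := by field_simp
      rw [e]; linarith
    rw [div_le_iff₀ hN', hv]
    have e : ((K : ℝ) / N + ∑ r ∈ Finset.range n,
      ((∑ j ∈ Finset.range (N / n + 1), b (n * j + r)) / ((N / n + 1 : ℕ) : ℝ)) *
        (1 / n + 1 / N)) * N = K + ∑ r ∈ Finset.range n,
      ((∑ j ∈ Finset.range (N / n + 1), b (n * j + r)) / ((N / n + 1 : ℕ) : ℝ)) *
        (N * (1 / n + 1 / N)) := by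
      rw [add_mul, Finset.sum_mul]
      congr 1
      · field_simp
      · apply Finset.sum_congr rfl; intro i _; ring
    simp only
    rw [e]
    refine h1.trans (add_le_add le_rfl (h2.trans (Finset.sum_le_sum fun r _ => ?_)))
    have hpos : (0 : ℝ) < ((N / n + 1 : ℕ) : ℝ) := by positivity
    have hS : 0 ≤ ∑ j ∈ Finset.range (N / n + 1), b (n * j + r) :=
      Finset.sum_nonneg fun j _ => hb0 _
    calc ∑ j ∈ Finset.range (N / n + 1), b (n * j + r)
        = (∑ j ∈ Finset.range (N / n + 1), b (n * j + r)) / ((N / n + 1 : ℕ) : ℝ) *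
          ((N / n + 1 : ℕ) : ℝ) := by field_simp
      _ ≤ _ := mul_le_mul_of_nonneg_left h3 (by positivity)
  rw [← hvt.limsup_eq]
  refine limsup_le_limsup ?_ ?_ ?_
  · filter_upwards [eventually_gt_atTop 0] with N hN using hle N hN
  · refine IsCoboundedUnder.of_frequently_ge (a := 0) (Eventually.frequently ?_)
    exact Eventually.of_forall fun N => div_nonneg (Finset.sum_nonneg fun i _ => ha0 i)
      (Nat.cast_nonneg _)
  · exact hvt.isBoundedUnder_le

/-- Fix `n ≥ 100`, `ν = 1/n`, and let `I = [−ν,1+ν]`, `J = [−2/3,−1/3]`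
be the corresponding arcs of `S¹ = ℝ/2ℤ`. Let `G(ω,x) = (σω, g_ω x)` be a skew product
whose fiber maps are orientation-preserving `C¹` diffeomorphisms depending continuously on
`ω` (C⁰ topology), such that for every `ω`: (i) `g_ω(I) ⊆ I`, on `I` the derivative lies
in `[1−ν,1)` if `ω₀ = 0` and in `(0,1/4]` if `ω₀ = 1`, and `g_ω(−ν) > 3/4` if `ω₀ = 1`;
(ii) `g_ω⁻¹(J) ⊆ J` and the derivative exceeds `1 + ν/2` on `J`; (iii) `g_ω(x) ≥ x + ν²/4`
on `[−1/3,−ν]` and `g_ω(x) ≤ x − ν²/4` on `[1+ν,4/3]`. Then `V = π⁻¹((0,1/4))` is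
`2^{−n}`-invisible for `G` with respect to `P × Leb`. -/
theorem stmt_11 (n : ℕ) (hn : 100 ≤ n) (ν : ℝ) (hν : ν = 1 / (n : ℝ))
    (g : Sig2 → S1 ≃ₜ S1)
    -- each fiber map is an orientation-preserving C¹ diffeomorphism, and the stated
    -- derivative bounds hold (computed via a C¹ lift):
    (hfiber : ∀ ω : Sig2, ∃ G : ℝ → ℝ,
      (∀ x : ℝ, ((G x : ℝ) : S1) = g ω ((x : ℝ) : S1)) ∧
      StrictMono G ∧ (∀ x, G (x + 2) = G x + 2) ∧
      ContDiff ℝ 1 G ∧ (∀ x, 0 < deriv G x) ∧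
      (ω 0 = false → ∀ x ∈ Icc (-ν) (1 + ν), deriv G x ∈ Ico (1 - ν) 1) ∧
      (ω 0 = true → ∀ x ∈ Icc (-ν) (1 + ν), deriv G x ∈ Ioc 0 (1 / 4)) ∧
      (∀ x ∈ Icc (-(2 / 3) : ℝ) (-(1 / 3)), 1 + ν / 2 < deriv G x))
    -- (i) `I` is forward invariant and `g_ω(−ν) > 3/4` when `ω₀ = 1`:
    (hmapsI : ∀ ω, MapsTo (g ω)
      ((fun x : ℝ => ((x : ℝ) : S1)) '' Icc (-ν) (1 + ν))
      ((fun x : ℝ => ((x : ℝ) : S1)) '' Icc (-ν) (1 + ν)))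
    (hone : ∀ ω : Sig2, ω 0 = true →
      ∃ t : ℝ, 3 / 4 < t ∧ t ≤ 1 + ν ∧ g ω (((-ν : ℝ) : S1)) = ((t : ℝ) : S1))
    -- (ii) `J` is backward invariant:
    (hmapsJ : ∀ ω, MapsTo (g ω).symm
      ((fun x : ℝ => ((x : ℝ) : S1)) '' Icc (-(2 / 3) : ℝ) (-(1 / 3)))
      ((fun x : ℝ => ((x : ℝ) : S1)) '' Icc (-(2 / 3) : ℝ) (-(1 / 3))))
    -- (iii) one-way motion between `J` and `I`:
    (hup : ∀ ω : Sig2, ∀ x ∈ Icc (-(1 / 3) : ℝ) (-ν),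
      ∃ t : ℝ, x + ν ^ 2 / 4 ≤ t ∧ t ≤ 1 + ν ∧ g ω ((x : ℝ) : S1) = ((t : ℝ) : S1))
    (hdown : ∀ ω : Sig2, ∀ x ∈ Icc (1 + ν) (4 / 3 : ℝ),
      ∃ t : ℝ, -ν ≤ t ∧ t ≤ x - ν ^ 2 / 4 ∧ g ω ((x : ℝ) : S1) = ((t : ℝ) : S1))
    -- (continuity of `ω ↦ g_ω` in the C⁰ topology):
    (hcont : Continuous fun ω => ((g ω : C(S1, S1))))
    -- `P` is the Bernoulli measure on `Σ²`:
    (P : Measure Sig2) [IsProbabilityMeasure P]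
    (hP : ∀ (s : Finset ℤ) (α : ℤ → Bool),
      P {ω : Sig2 | ∀ i ∈ s, ω i = α i} = (1 / 2 : ENNReal) ^ s.card) :
    ∀ᵐ p ∂(P.prod (volume : Measure S1)),
      limsup (fun N : ℕ => visitFreq (skew g)
        {q : Sig2 × S1 | q.2 ∈ (fun t : ℝ => ((t : ℝ) : S1)) '' Ioo 0 (1 / 4)} p N)
        atTop ≤ (1 / 2 : ℝ) ^ n := by
  have hn' : (100 : ℝ) ≤ n := by exact_mod_cast hn
  have hν0 : 0 < ν := by rw [hν]; positivity
  have hν1 : ν ≤ 1 / 100 := by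
    rw [hν]; apply one_div_le_one_div_of_le <;> linarith
  -- one step in `I`
  have stepI : ∀ ω : Sig2, ∀ x ∈ Icc (-ν) (1 + ν), ∃ y ∈ Icc (-ν) (1 + ν),
      g ω (x : S1) = (y : S1) ∧ (ω 0 = true → 3 / 4 < y) ∧
      (ω 0 = false → (1 - ν) * (x + ν) ≤ y + ν) := by
    intro ω x hx
    obtain ⟨ℓ, h1, h2, h3, h4, _, h6, h7, h8⟩ := hfiber ω
    obtain ⟨L, l1, l2, l3, l4, l5, l6⟩ := exists_lift ν hν0 hν1 (g ω) ℓ h1 h2 h3 h4 (hmapsI ω)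
    have hl : -ν ∈ Icc (-ν) (1 + ν) := ⟨le_rfl, by linarith⟩
    refine ⟨L x, l6 hx, (l1 x).symm, ?_, ?_⟩
    · intro h
      obtain ⟨t, ht1, ht2, ht3⟩ := hone ω h
      have hLI := l6 hl
      have e : L (-ν) = t := by
        apply S1_inj
        · rw [l1, ht3]
        · linarith [hLI.1]
        · linarith [hLI.2]
      have := l2.monotone hx.1
      linarith
    · intro h
      have := Convex.mul_sub_le_image_sub_of_le_deriv (convex_Icc (-ν) (1 + ν))
        l4.continuous.continuousOn l4.differentiableOn (C := 1 - ν)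
        (fun z hz => by
          rw [l5]; exact (h6 h z (interior_subset hz)).1) (-ν) hl x hx hx.1
      have hLI := (l6 hl).1
      have e : x - -ν = x + ν := by ring
      rw [e] at this
      linarith
  -- one step in `J`
  have stepJ : ∀ ω : Sig2, ∀ x ∈ Icc (-(2 / 3) : ℝ) (-(1 / 3)),
      ∀ y ∈ Icc (-(2 / 3) : ℝ) (-(1 / 3)), x ≤ y →
      g ω (x : S1) ∈ ((fun x : ℝ => ((x : ℝ) : S1)) '' Icc (-(2 / 3) : ℝ) (-(1 / 3))) →
      g ω (y : S1) ∈ ((fun x : ℝ => ((x : ℝ) : S1)) '' Icc (-(2 / 3) : ℝ) (-(1 / 3))) →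
      ∃ x' ∈ Icc (-(2 / 3) : ℝ) (-(1 / 3)), ∃ y' ∈ Icc (-(2 / 3) : ℝ) (-(1 / 3)),
        g ω (x : S1) = (x' : S1) ∧ g ω (y : S1) = (y' : S1) ∧
        (1 + ν / 2) * (y - x) ≤ y' - x' := by
    intro ω x hx y hy hxy gx gy
    obtain ⟨ℓ, h1, h2, h3, h4, _, h6, h7, h8⟩ := hfiber ω
    obtain ⟨L, l1, l2, l3, l4, l5, l6⟩ := exists_lift ν hν0 hν1 (g ω) ℓ h1 h2 h3 h4 (hmapsI ω)
    have hL0 := l6 (show (0 : ℝ) ∈ Icc (-ν) (1 + ν) from ⟨by linarith, by linarith⟩)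
    have hL2 : L 0 = L (-2) + 2 := by rw [← l3]; norm_num
    have inJ : ∀ z ∈ Icc (-(2 / 3) : ℝ) (-(1 / 3)),
        g ω (z : S1) ∈ ((fun x : ℝ => ((x : ℝ) : S1)) '' Icc (-(2 / 3) : ℝ) (-(1 / 3))) →
        L z ∈ Icc (-(2 / 3) : ℝ) (-(1 / 3)) := by
      rintro z hz ⟨t, ht, hte⟩
      have a1 : L (-2) < L z := l2 (by linarith [hz.1])
      have a2 : L z < L 0 := l2 (by linarith [hz.2])
      have e : L z = t := by
        apply S1_inj
        · rw [l1, ← hte]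
        · linarith [ht.2, hL0.1]
        · linarith [ht.1, hL0.2]
      rw [e]; exact ht
    refine ⟨L x, inJ x hx gx, L y, inJ y hy gy, (l1 x).symm, (l1 y).symm, ?_⟩
    exact Convex.mul_sub_le_image_sub_of_le_deriv (convex_Icc (-(2 / 3) : ℝ) (-(1 / 3)))
        l4.continuous.continuousOn l4.differentiableOn
        (fun z hz => by
          rw [l5]; exact (h8 z (interior_subset hz)).le) x hx y hy hxy
  -- almost every orbit leaves `J`
  have hskew : Continuous (skew g) := by
    refine Continuous.prodMk ?_ ?_
    · exact continuous_pi fun k => (continuous_apply (k + 1)).comp continuous_fst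
    · have : Continuous fun p : Sig2 × S1 => ((g p.1 : C(S1, S1))) p.2 :=
        (hcont.comp continuous_fst).eval continuous_snd
      exact this
  have hJc : IsClosed ((fun x : ℝ => ((x : ℝ) : S1)) '' Icc (-(2 / 3) : ℝ) (-(1 / 3))) :=
    (isCompact_Icc.image (AddCircle.continuous_mk' (2 : ℝ))).isClosed
  have hleave : ∀ᵐ p ∂(P.prod (volume : Measure S1)), ∃ j, ((skew g)^[j] p).2 ∉
      ((fun x : ℝ => ((x : ℝ) : S1)) '' Icc (-(2 / 3) : ℝ) (-(1 / 3))) := by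
    set B : Set (Sig2 × S1) := {p | ∀ j, ((skew g)^[j] p).2 ∈
      ((fun x : ℝ => ((x : ℝ) : S1)) '' Icc (-(2 / 3) : ℝ) (-(1 / 3)))} with hB
    have hBc : IsClosed B := by
      rw [hB, ofPred_forall]
      exact isClosed_iInter fun j => hJc.preimage (continuous_snd.comp (hskew.iterate j))
    have hB0 : (P.prod (volume : Measure S1)) B = 0 := by
      rw [Measure.measure_prod_null hBc.measurableSet]
      refine Eventually.of_forall fun ω => ?_
      have hs := stay_J_subsingleton ν hν0 g stepJ ω
      have hs' : (Prod.mk ω ⁻¹' B).Subsingleton := hs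
      rcases hs'.eq_empty_or_singleton with h | ⟨x, h⟩
      · simp [h]
      · show volume (Prod.mk ω ⁻¹' B) = 0
        rw [h]; exact S1_singleton_null x
    have : ∀ᵐ p ∂(P.prod (volume : Measure S1)), p ∉ B := measure_eq_zero_iff_ae_notMem.1 hB0
    filter_upwards [this] with p hp
    rw [hB, mem_ofPred_eq] at hp
    push Not at hp
    exact hp
  have hslln : ∀ᵐ ω ∂P, ∀ r : ℕ, Tendsto (fun M : ℕ => (∑ j ∈ Finset.range M,
      (zeroBlock n (n * j + r)).indicator (fun _ => (1 : ℝ)) ω) / M) atTop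
      (𝓝 ((1 / 2 : ℝ) ^ n)) := ae_all_iff.2 fun r => block_slln P hP n r
  have hslln' := (Measure.quasiMeasurePreserving_fst (μ := P) (ν := (volume : Measure S1))).ae hslln
  filter_upwards [hleave, hslln'] with p hp1 hp2
  obtain ⟨j, hj⟩ := hp1
  obtain ⟨k, hk⟩ := enter_I ν hν0 hν1 g hup hdown _ hj
  rw [← Function.iterate_add_apply] at hk
  set T := k + j with hT
  obtain ⟨x, hx, hxe⟩ := hk
  have horb := orbit_I ν hν0 hν1 g stepI ((skew g)^[T] p) x hx hxe.symm
  unfold visitFreq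
  refine limsup_bound n (by omega) _
    (fun m => (zeroBlock n (T + m)).indicator (fun _ => (1 : ℝ)) p.1) _ (T + n) ?_ ?_ ?_ ?_ ?_
  · intro i; exact indicator_nonneg (fun _ _ => zero_le_one) _
  · intro i; exact indicator_le_self' (fun _ _ => zero_le_one) _
  · intro i; exact indicator_nonneg (fun _ _ => zero_le_one) _
  · intro i
    by_cases hV : (skew g)^[T + n + i] p ∈
        {q : Sig2 × S1 | q.2 ∈ (fun t : ℝ => ((t : ℝ) : S1)) '' Ioo 0 (1 / 4)}
    · have hz : p.1 ∈ zeroBlock n (T + i) := by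
        intro m hm
        by_contra hne
        have hm1 : p.1 m = true := by simpa using hne
        rw [Finset.mem_Ico] at hm
        push_cast at hm
        obtain ⟨j', hj'⟩ : ∃ j' : ℕ, m = T + j' := ⟨(m - T).toNat, by omega⟩
        obtain ⟨y, hy, hye, hyj⟩ := horb (n + i)
        have h1 := hyj j' (by omega) (by
          rw [skew_iter_fst, add_comm, ← hj']; exact hm1)
        have h2 := pow_bound n hn ν hν (n + i - 1 - j') (by omega)
        obtain ⟨t, ht, hte⟩ := hV
        have e : y = t := by
          apply S1_inj
          · rw [← hye, ← Function.iterate_add_apply,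
              show n + i + T = T + n + i by omega]
            exact hte.symm
          · linarith [ht.2, hy.1]
          · linarith [ht.1, hy.2]
        rw [e] at h1
        linarith [ht.2]
      rw [indicator_of_mem hV]
      rw [indicator_of_mem hz]
    · rw [indicator_of_notMem hV]
      exact indicator_nonneg (fun _ _ => zero_le_one) _
  · intro r _
    have := hp2 (T + r)
    have e : ∀ j, n * j + (T + r) = T + (n * j + r) := fun j => by ring
    simpa only [e] using this
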